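/- arXiv:2311.15178 — 8 statements merged into one kernel-verified Lean document; each statement's English description precedes it below -/
import Mathlib

section
/- For all positive integers F and K with F ≥ 2, s(F, K, F−1) = ⌈K/F⌉. -/
open scoped Classical

/-- A placement delivery array with parameters `(F, K, Z)` over alphabet `S`:
an `F × K` array of cells that are either empty (`none`) or an element of `S`,
such that each column has exactly `Z` empty cells, no element occurs twice in a
row or in a column, and two equal entries in positions `(j₁,k₁)`, `(j₂,k₂)`
force the cells `(j₁,k₂)` and `(j₂,k₁)` to be empty. -/
def IsPDA {S : Type} (F K Z : ℕ) (A : Fin F → Fin K → Option S) : Prop :=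
  (∀ k : Fin K, (Finset.univ.filter fun j : Fin F => A j k = none).card = Z) ∧
  (∀ (j : Fin F) (k₁ k₂ : Fin K) (t : S), A j k₁ = some t → A j k₂ = some t → k₁ = k₂) ∧
  (∀ (j₁ j₂ : Fin F) (k : Fin K) (t : S), A j₁ k = some t → A j₂ k = some t → j₁ = j₂) ∧
  (∀ (j₁ j₂ : Fin F) (k₁ k₂ : Fin K) (t : S), j₁ ≠ j₂ → k₁ ≠ k₂ →
      A j₁ k₁ = some t → A j₂ k₂ = some t → A j₁ k₂ = none ∧ A j₂ k₁ = none)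

/-- `sPDA F K Z` is the minimum size of an alphabet `S` for which an `S`-PDA with
parameters `(F, K, Z)` exists. -/
noncomputable def sPDA (F K Z : ℕ) : ℕ :=
  sInf {n : ℕ | ∃ A : Fin F → Fin K → Option (Fin n), IsPDA F K Z A}

/-!
No row repeats a symbol, so counting the nonempty cells by columns and by rows gives
`K * (F - Z) ≤ F * |S|`. For `Z = F - 1` this bound is the only obstruction: an injection
`k ↦ (row, symbol)` on the columns places one symbol in each column, and since every other cell is
empty, the condition on pairs of equal entries holds automatically.
-/

section

variable {F K Z : ℕ} {S : Type}

namespace IsPDA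

variable {A : Fin F → Fin K → Option S}

theorem card_column_ne_none (hA : IsPDA F K Z A) (k : Fin K) :
    (Finset.univ.filter fun j => A j k ≠ none).card = F - Z := by
  have hcard := Finset.card_filter_add_card_filter_not (s := Finset.univ) (fun j => A j k = none)
  rw [hA.1 k, Finset.card_fin] at hcard
  exact Nat.eq_sub_of_add_eq' hcard

theorem card_row_ne_none_le [Fintype S] (hA : IsPDA F K Z A) (j : Fin F) :
    (Finset.univ.filter fun k => A j k ≠ none).card ≤ Fintype.card S := by
  have hsymbol : ∀ k : {k // A j k ≠ none}, ∃ t, A j k = some t :=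
    fun k => Option.ne_none_iff_exists'.1 k.2
  choose symbol hsymbol using hsymbol
  have hinj : Function.Injective symbol := fun k₁ k₂ h =>
    Subtype.ext (hA.2.1 j k₁ k₂ _ (hsymbol k₁) (h ▸ hsymbol k₂))
  simpa only [Fintype.card_subtype] using Fintype.card_le_of_injective symbol hinj

theorem mul_sub_le_mul_card [Fintype S] (hA : IsPDA F K Z A) :
    K * (F - Z) ≤ F * Fintype.card S :=
  calc K * (F - Z)
      = ∑ k, (Finset.univ.filter fun j => A j k ≠ none).card := by
        simp only [hA.card_column_ne_none, Finset.sum_const, Finset.card_fin, smul_eq_mul]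
    _ = ∑ j, (Finset.univ.filter fun k => A j k ≠ none).card :=
        (Finset.sum_card_bipartiteAbove_eq_sum_card_bipartiteBelow fun j k => A j k ≠ none).symm
    _ ≤ ∑ _j : Fin F, Fintype.card S := Finset.sum_le_sum fun j _ => hA.card_row_ne_none_le j
    _ = F * Fintype.card S := by
        simp only [Finset.sum_const, Finset.card_fin, smul_eq_mul]

end IsPDA

/-- The array with one nonempty cell per column, in the row and with the symbol that the labelling
`c` assigns to that column. -/
def singleEntryArray (c : Fin K → Fin F × S) (j : Fin F) (k : Fin K) : Option S :=
  if j = (c k).1 then some (c k).2 else none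

theorem singleEntryArray_eq_none_iff {c : Fin K → Fin F × S} {j : Fin F} {k : Fin K} :
    singleEntryArray c j k = none ↔ j ≠ (c k).1 := by
  simp [singleEntryArray]

theorem singleEntryArray_eq_some_iff {c : Fin K → Fin F × S} {j : Fin F} {k : Fin K} {t : S} :
    singleEntryArray c j k = some t ↔ c k = (j, t) := by
  simp [singleEntryArray, Prod.ext_iff, eq_comm]

theorem isPDA_singleEntryArray {c : Fin K → Fin F × S} (hc : Function.Injective c) :
    IsPDA F K (F - 1) (singleEntryArray c) := by
  simp only [IsPDA, singleEntryArray_eq_none_iff, singleEntryArray_eq_some_iff]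
  refine ⟨fun k => ?_, fun j k₁ k₂ t h₁ h₂ => hc (h₁.trans h₂.symm),
    fun j₁ j₂ k t h₁ h₂ => congrArg Prod.fst (h₁.symm.trans h₂), ?_⟩
  · rw [Finset.filter_ne', Finset.card_erase_of_mem (Finset.mem_univ _), Finset.card_fin]
  · intro j₁ j₂ k₁ k₂ t hj _ h₁ h₂
    rw [h₁, h₂]
    exact ⟨hj, hj.symm⟩

theorem exists_isPDA_sub_one_iff [Fintype S] (hF : 0 < F) :
    (∃ A : Fin F → Fin K → Option S, IsPDA F K (F - 1) A) ↔ K ≤ F * Fintype.card S := by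
  constructor
  · rintro ⟨A, hA⟩
    simpa only [Nat.sub_sub_self (Nat.one_le_of_lt hF), mul_one] using hA.mul_sub_le_mul_card
  · intro hK
    have hcard : Fintype.card (Fin K) ≤ Fintype.card (Fin F × S) := by
      simpa only [Fintype.card_prod, Fintype.card_fin] using hK
    obtain ⟨c⟩ := Function.Embedding.nonempty_of_card_le hcard
    exact ⟨singleEntryArray c, isPDA_singleEntryArray c.injective⟩

end

theorem stmt_1 (F K : ℕ) (hF : 2 ≤ F) (hK : 0 < K) :
    sPDA F K (F - 1) = ⌈(K : ℚ) / (F : ℚ)⌉₊ := by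
  have hF_pos : 0 < F := by lia
  have halphabets : {n : ℕ | ∃ A : Fin F → Fin K → Option (Fin n), IsPDA F K (F - 1) A} =
      Set.Ici ⌈(K : ℚ) / (F : ℚ)⌉₊ := by
    ext n
    rw [Set.mem_ofPred_eq, exists_isPDA_sub_one_iff hF_pos, Fintype.card_fin, Set.mem_Ici,
      Nat.ceil_le, div_le_iff₀' (Nat.cast_pos.2 hF_pos)]
    norm_cast
  rw [sPDA, halphabets, csInf_Ici]
end

section
/- For all positive integers F, K and t with F ≥ t·K, s(F, K, F−t) = t. -/
open scoped Classical

/-!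
A column with `Z` empty cells carries `F - Z` pairwise distinct symbols, so the alphabet has at
least `F - Z` elements. Conversely, when `t * K ≤ F` the columns can be given pairwise disjoint
sets of `t` rows, each filled with all `t` symbols; every row then has at most one nonempty cell, so
the conditions relating different columns hold trivially.
-/

theorem card_le_card_filter_eq_none_add_card {α β : Type*} [Fintype α] [Fintype β]
    {f : α → Option β} (hf : ∀ a₁ a₂ b, f a₁ = some b → f a₂ = some b → a₁ = a₂) :
    Fintype.card α ≤ (Finset.univ.filter fun a => f a = none).card + Fintype.card β := by
  have card_ne_none_le : (Finset.univ.filter fun a => ¬f a = none).card ≤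
      (Finset.univ.erase (none : Option β)).card := by
    refine Finset.card_le_card_of_injOn f (fun a ha => by simpa using ha) fun a₁ ha₁ a₂ _ heq => ?_
    obtain ⟨b, hb⟩ := Option.ne_none_iff_exists'.mp (Finset.mem_filter.mp ha₁).2
    exact hf a₁ a₂ b hb (heq ▸ hb)
  have card_erase_none : (Finset.univ.erase (none : Option β)).card = Fintype.card β := by simp
  rw [← Finset.card_univ, ← Finset.card_filter_add_card_filter_not fun a => f a = none]
  lia

theorem IsPDA.le_add_card {S : Type} [Fintype S] {F K Z : ℕ} {A : Fin F → Fin K → Option S}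
    (hA : IsPDA F K Z A) (k : Fin K) : F ≤ Z + Fintype.card S := by
  obtain ⟨card_empty, -, col_inj, -⟩ := hA
  simpa [card_empty k] using
    card_le_card_filter_eq_none_add_card fun j₁ j₂ s => col_inj j₁ j₂ k s

/-- The array in which column `k` contains each symbol `s` exactly once, in row `e (k, s)`. As `e`
is injective, different columns occupy disjoint sets of rows: up to a permutation of the rows this
is block diagonal. It attains the lower bound on the alphabet size. -/
noncomputable def blockDiagonalArray {S : Type} {F K : ℕ} (e : Fin K × S ↪ Fin F) :
    Fin F → Fin K → Option S :=
  fun j k => Function.partialInv (fun s => e (k, s)) j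

section blockDiagonalArray

variable {S : Type} {F K : ℕ} (e : Fin K × S ↪ Fin F)

theorem blockDiagonalArray_eq_some_iff {j : Fin F} {k : Fin K} {s : S} :
    blockDiagonalArray e j k = some s ↔ e (k, s) = j :=
  Function.Injective.isPartialInv (e.injective.comp (Prod.mk_right_injective k)) s j

theorem blockDiagonalArray_eq_none_iff {j : Fin F} {k : Fin K} :
    blockDiagonalArray e j k = none ↔ ∀ s, e (k, s) ≠ j := by
  simp only [Option.eq_none_iff_forall_ne_some, ne_eq, blockDiagonalArray_eq_some_iff]

theorem card_filter_blockDiagonalArray_eq_none [Fintype S] (k : Fin K) :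
    (Finset.univ.filter fun j => blockDiagonalArray e j k = none).card = F - Fintype.card S := by
  have filter_eq : (Finset.univ.filter fun j => blockDiagonalArray e j k = none) =
      (Finset.univ.map ((Function.Embedding.sectR k S).trans e))ᶜ := by
    ext j
    simp [blockDiagonalArray_eq_none_iff]
  rw [filter_eq, Finset.card_compl, Finset.card_map, Finset.card_univ, Fintype.card_fin]

theorem column_eq_of_blockDiagonalArray_eq_some {j : Fin F} {k₁ k₂ : Fin K} {s₁ s₂ : S}
    (h₁ : blockDiagonalArray e j k₁ = some s₁) (h₂ : blockDiagonalArray e j k₂ = some s₂) :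
    k₁ = k₂ := by
  rw [blockDiagonalArray_eq_some_iff] at h₁ h₂
  exact congrArg Prod.fst (e.injective (h₁.trans h₂.symm))

theorem blockDiagonalArray_eq_none_of_ne {j : Fin F} {k₁ k₂ : Fin K} {s : S}
    (h : blockDiagonalArray e j k₁ = some s) (hk : k₁ ≠ k₂) :
    blockDiagonalArray e j k₂ = none :=
  Option.eq_none_iff_forall_ne_some.mpr fun _ h' =>
    hk (column_eq_of_blockDiagonalArray_eq_some e h h')

theorem isPDA_blockDiagonalArray [Fintype S] :
    IsPDA F K (F - Fintype.card S) (blockDiagonalArray e) := by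
  refine ⟨card_filter_blockDiagonalArray_eq_none e,
    fun _ _ _ _ => column_eq_of_blockDiagonalArray_eq_some e,
    fun j₁ j₂ k s h₁ h₂ => ?_, fun j₁ j₂ k₁ k₂ s _ hk h₁ h₂ => ?_⟩
  · rw [blockDiagonalArray_eq_some_iff] at h₁ h₂
    exact h₁.symm.trans h₂
  · exact ⟨blockDiagonalArray_eq_none_of_ne e h₁ hk, blockDiagonalArray_eq_none_of_ne e h₂ hk.symm⟩

end blockDiagonalArray

theorem exists_isPDA_of_mul_le {F K t : ℕ} (h : t * K ≤ F) :
    ∃ A : Fin F → Fin K → Option (Fin t), IsPDA F K (F - t) A := by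
  let e : Fin K × Fin t ↪ Fin F :=
    finProdFinEquiv.toEmbedding.trans (Fin.castLEEmb (Nat.mul_comm t K ▸ h))
  exact ⟨blockDiagonalArray e, by simpa using isPDA_blockDiagonalArray e⟩

theorem stmt_2 (F K t : ℕ) (hF : 0 < F) (hK : 0 < K) (ht : 0 < t) (h : t * K ≤ F) :
    sPDA F K (F - t) = t := by
  have ht_le : t ≤ F := (Nat.le_mul_of_pos_right t hK).trans h
  refine IsLeast.csInf_eq ⟨exists_isPDA_of_mul_le h, fun n ⟨A, hA⟩ => ?_⟩
  have hF_le : F ≤ F - t + n := by simpa using hA.le_add_card ⟨0, hK⟩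
  lia
end

section
/- For every positive integer F and every integer Z with 0 ≤ Z ≤ F, s(F, 2, Z) = 2F − 3Z if F ≥ 2Z, and s(F, 2, Z) = F − Z otherwise. -/
open scoped Classical

/-!
Each column of a PDA shows exactly `F - Z` symbols. A symbol shared by two columns sits, in the
first of them, in a row where the second is empty, so two columns share at most `Z` symbols;
inclusion–exclusion then forces at least `2 (F - Z) - Z` symbols. Both bounds are attained at once:
leave the first `Z` cells of the first column empty, and in the second column put the first
`min Z (F - Z)` symbols of the first column into these rows, leave the next `Z` cells empty, and
fill the remaining ones with new symbols.
-/

section LowerBound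

variable {S : Type} {F K Z : ℕ} {A : Fin F → Fin K → Option S}

/-- The set of symbols occurring in column `k` of the array `A`. -/
noncomputable def columnSymbols (A : Fin F → Fin K → Option S) (k : Fin K) : Finset S :=
  (Finset.univ.image fun j => A j k).eraseNone

theorem mem_columnSymbols {k : Fin K} {t : S} : t ∈ columnSymbols A k ↔ ∃ j, A j k = some t := by
  simp [columnSymbols]

theorem IsPDA.card_columnSymbols (hA : IsPDA F K Z A) (k : Fin K) :
    (columnSymbols A k).card = F - Z := by
  obtain ⟨hempty, -, hcol, -⟩ := hA
  have symbols_eq_image : (columnSymbols A k).map Function.Embedding.some =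
      (Finset.univ.filter fun j => ¬ A j k = none).image fun j => A j k := by
    ext (_ | t)
    · simp
    · simp only [Finset.mem_map, mem_columnSymbols, Function.Embedding.some_apply,
        Finset.mem_image, Finset.mem_filter, Finset.mem_univ, true_and]
      grind
  have injOn_nonempty : Set.InjOn (fun j => A j k)
      (Finset.univ.filter fun j => ¬ A j k = none : Finset (Fin F)) := by
    intro i hi j _ hij
    obtain ⟨t, ht⟩ := Option.ne_none_iff_exists'.1 (Finset.mem_filter.1 hi).2
    exact hcol i j k t ht (hij.symm.trans ht)
  have card_empty_add_card_nonempty := Finset.card_filter_add_card_filter_not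
    (s := (Finset.univ : Finset (Fin F))) (fun j => A j k = none)
  rw [hempty k, Finset.card_univ, Fintype.card_fin] at card_empty_add_card_nonempty
  rw [← Finset.card_map Function.Embedding.some, symbols_eq_image,
    Finset.card_image_of_injOn injOn_nonempty]
  omega

theorem IsPDA.card_columnSymbols_inter_le (hA : IsPDA F K Z A) {k₁ k₂ : Fin K} (hk : k₁ ≠ k₂) :
    (columnSymbols A k₁ ∩ columnSymbols A k₂).card ≤ Z := by
  obtain ⟨hempty, hrow, -, hcross⟩ := hA
  have shared_subset : (columnSymbols A k₁ ∩ columnSymbols A k₂).map Function.Embedding.some ⊆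
      (Finset.univ.filter fun j => A j k₂ = none).image fun j => A j k₁ := by
    intro o ho
    obtain ⟨t, ht, rfl⟩ := Finset.mem_map.1 ho
    obtain ⟨ht₁, ht₂⟩ := Finset.mem_inter.1 ht
    obtain ⟨i, hi⟩ := mem_columnSymbols.1 ht₁
    obtain ⟨j, hj⟩ := mem_columnSymbols.1 ht₂
    have hij : i ≠ j := fun h => hk (hrow i k₁ k₂ t hi (h ▸ hj))
    exact Finset.mem_image.2
      ⟨i, Finset.mem_filter.2 ⟨Finset.mem_univ i, (hcross i j k₁ k₂ t hij hk hi hj).1⟩, hi⟩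
  calc (columnSymbols A k₁ ∩ columnSymbols A k₂).card
      = ((columnSymbols A k₁ ∩ columnSymbols A k₂).map Function.Embedding.some).card :=
        (Finset.card_map _).symm
    _ ≤ ((Finset.univ.filter fun j => A j k₂ = none).image fun j => A j k₁).card :=
        Finset.card_le_card shared_subset
    _ ≤ (Finset.univ.filter fun j => A j k₂ = none).card := Finset.card_image_le
    _ = Z := hempty k₂

theorem IsPDA.sub_le_card [Fintype S] (hA : IsPDA F K Z A) (k : Fin K) :
    F - Z ≤ Fintype.card S :=
  hA.card_columnSymbols k ▸ Finset.card_le_univ _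

theorem IsPDA.two_mul_sub_three_mul_le_card [Fintype S] (hA : IsPDA F K Z A) {k₁ k₂ : Fin K}
    (hk : k₁ ≠ k₂) : 2 * F - 3 * Z ≤ Fintype.card S := by
  have card_union_add_card_inter :=
    Finset.card_union_add_card_inter (columnSymbols A k₁) (columnSymbols A k₂)
  rw [hA.card_columnSymbols, hA.card_columnSymbols] at card_union_add_card_inter
  have card_inter_le := hA.card_columnSymbols_inter_le hk
  have card_union_le := Finset.card_le_univ (columnSymbols A k₁ ∪ columnSymbols A k₂)
  omega

end LowerBound

section Construction

theorem card_filter_val_mem_Ico {n a b : ℕ} (hb : b ≤ n) :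
    (Finset.univ.filter fun j : Fin n => (j : ℕ) ∈ Finset.Ico a b).card = b - a := by
  have filter_eq_attachFin : (Finset.univ.filter fun j : Fin n => (j : ℕ) ∈ Finset.Ico a b) =
      (Finset.Ico a b).attachFin fun _ hm => (Finset.mem_Ico.1 hm).2.trans_le hb := by
    ext j
    simp
  rw [filter_eq_attachFin, Finset.card_attachFin, Nat.card_Ico]

theorem IsPDA.pmap {S T : Type} {F K Z : ℕ} {A : Fin F → Fin K → Option S} (hA : IsPDA F K Z A)
    {p : S → Prop} (f : ∀ t, p t → T) (hf : ∀ t u ht hu, f t ht = f u hu → t = u)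
    (hp : ∀ j k, ∀ t ∈ A j k, p t) : IsPDA F K Z fun j k => (A j k).pmap f (hp j k) := by
  obtain ⟨hempty, hrow, hcol, hcross⟩ := hA
  simp only [IsPDA, Option.pmap_eq_none_iff, Option.pmap_eq_some_iff]
  refine ⟨hempty, ?_, ?_, ?_⟩ <;> grind

theorem isPDA_two_of_columns {S : Type} {F Z : ℕ} {c d : Fin F → Option S}
    (hc : (Finset.univ.filter fun j => c j = none).card = Z)
    (hd : (Finset.univ.filter fun j => d j = none).card = Z)
    (hc_inj : ∀ i j t, c i = some t → c j = some t → i = j)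
    (hd_inj : ∀ i j t, d i = some t → d j = some t → i = j)
    (hcross : ∀ i j t, c i = some t → d j = some t → d i = none ∧ c j = none) :
    IsPDA F 2 Z fun j => ![c j, d j] := by
  have row_ne (j : Fin F) (t : S) (hcj : c j = some t) : d j ≠ some t := fun hdj =>
    Option.some_ne_none t (hdj.symm.trans (hcross j j t hcj hdj).1)
  simp only [IsPDA, Fin.forall_fin_two, Matrix.cons_val_zero, Matrix.cons_val_one,
    implies_true, true_and, and_true]
  refine ⟨⟨hc, hd⟩, fun j => ⟨?_, ?_⟩, fun i j => ⟨hc_inj i j, hd_inj i j⟩, ?_⟩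
  · exact fun t hcj hdj => (row_ne j t hcj hdj).elim
  · exact fun t hdj hcj => (row_ne j t hcj hdj).elim
  · grind

/-- The first column of the optimal two-column array: `Z` empty cells followed by the symbols
`0, 1, …, F - Z - 1`. -/
def optimalLeftColumn (F Z : ℕ) (j : Fin F) : Option ℕ :=
  if (j : ℕ) < Z then none else some (j - Z)

/-- The second column of the optimal two-column array: the symbols `0, 1, …` shared with
`optimalLeftColumn`, then `Z` empty cells, then the new symbols `F - Z, F - Z + 1, …`. -/
def optimalRightColumn (F Z : ℕ) (j : Fin F) : Option ℕ :=
  if (j : ℕ) < min Z (F - Z) then some j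
  else if (j : ℕ) < 2 * Z then none
  else some (F - Z + (j - 2 * Z))

variable {F Z : ℕ}

theorem card_optimalLeftColumn_eq_none (hZ : Z ≤ F) :
    (Finset.univ.filter fun j => optimalLeftColumn F Z j = none).card = Z := by
  have eq_none_iff (j : Fin F) : optimalLeftColumn F Z j = none ↔ (j : ℕ) ∈ Finset.Ico 0 Z := by
    simp [optimalLeftColumn]
  simp only [eq_none_iff, card_filter_val_mem_Ico hZ, Nat.sub_zero]

theorem card_optimalRightColumn_eq_none (hZ : Z ≤ F) :
    (Finset.univ.filter fun j => optimalRightColumn F Z j = none).card = Z := by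
  have eq_none_iff (j : Fin F) : optimalRightColumn F Z j = none ↔
      (j : ℕ) ∈ Finset.Ico (min Z (F - Z)) (min F (2 * Z)) := by
    grind [optimalRightColumn]
  simp only [eq_none_iff, card_filter_val_mem_Ico (min_le_left F (2 * Z))]
  omega

theorem optimalLeftColumn_eq_some_inj (i j : Fin F) (t : ℕ)
    (hi : optimalLeftColumn F Z i = some t) (hj : optimalLeftColumn F Z j = some t) : i = j := by
  grind [optimalLeftColumn]

theorem optimalRightColumn_eq_some_inj (i j : Fin F) (t : ℕ)
    (hi : optimalRightColumn F Z i = some t) (hj : optimalRightColumn F Z j = some t) : i = j := by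
  grind [optimalRightColumn]

theorem optimal_eq_none_of_shared (i j : Fin F) (t : ℕ)
    (hi : optimalLeftColumn F Z i = some t) (hj : optimalRightColumn F Z j = some t) :
    optimalRightColumn F Z i = none ∧ optimalLeftColumn F Z j = none := by
  have hi_val : (i : ℕ) = Z + t := by grind [optimalLeftColumn]
  have hj_val : (j : ℕ) = t ∧ t < min Z (F - Z) := by grind [optimalRightColumn]
  constructor
  · grind [optimalRightColumn]
  · grind [optimalLeftColumn]

theorem isPDA_optimal (hZ : Z ≤ F) :
    IsPDA F 2 Z fun j => ![optimalLeftColumn F Z j, optimalRightColumn F Z j] :=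
  isPDA_two_of_columns (card_optimalLeftColumn_eq_none hZ) (card_optimalRightColumn_eq_none hZ)
    optimalLeftColumn_eq_some_inj optimalRightColumn_eq_some_inj optimal_eq_none_of_shared

theorem optimal_lt_max (j : Fin F) (k : Fin 2) :
    ∀ t ∈ ![optimalLeftColumn F Z j, optimalRightColumn F Z j] k,
      t < max (F - Z) (2 * F - 3 * Z) := by
  revert k
  simp only [Fin.forall_fin_two, Matrix.cons_val_zero, Matrix.cons_val_one, Option.mem_def]
  constructor
  · grind [optimalLeftColumn]
  · grind [optimalRightColumn]

theorem exists_isPDA_two (hZ : Z ≤ F) :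
    ∃ A : Fin F → Fin 2 → Option (Fin (max (F - Z) (2 * F - 3 * Z))), IsPDA F 2 Z A :=
  ⟨_, (isPDA_optimal hZ).pmap Fin.mk (fun _ _ _ _ => Fin.mk.inj) optimal_lt_max⟩

end Construction

theorem sPDA_two_eq_max {F Z : ℕ} (hZ : Z ≤ F) :
    sPDA F 2 Z = max (F - Z) (2 * F - 3 * Z) := by
  apply le_antisymm
  · exact Nat.sInf_le (exists_isPDA_two hZ)
  · refine le_csInf ⟨_, exists_isPDA_two hZ⟩ ?_
    rintro n ⟨A, hA⟩
    rw [← Fintype.card_fin n]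
    exact max_le (hA.sub_le_card 0) (hA.two_mul_sub_three_mul_le_card zero_ne_one)

theorem stmt_3 (F Z : ℕ) (hF : 0 < F) (hZ : Z ≤ F) :
    sPDA F 2 Z = if 2 * Z ≤ F then 2 * F - 3 * Z else F - Z := by
  rw [sPDA_two_eq_max hZ]
  split_ifs with h
  · exact max_eq_right (by omega)
  · exact max_eq_left (by omega)
end

section
/- Let F, K be positive integers and 0 ≤ Z < F. If there exists an S-PDA with parameters (F, K, Z) and |S| = ⌈K(F − Z)/(Z + 1)⌉ (i.e., an RPDA(F, K, Z) exists), then K > (Z + 1)(F − Z − 1)/(F − Z). -/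
open scoped Classical

/-!
A single column already forces the bound: its `F - Z` nonempty cells carry distinct symbols, so
`F - Z ≤ |S|`. When `|S|` is the ceiling of `K(F - Z)/(Z + 1)`, this says that
`F - Z - 1 < K(F - Z)/(Z + 1)`, which rearranges to the claim.
-/

theorem card_filter_ne_none_le_card {ι S : Type*} [Fintype ι] [Fintype S] {c : ι → Option S}
    (hc : ∀ i j t, c i = some t → c j = some t → i = j) :
    (Finset.univ.filter fun i => c i ≠ none).card ≤ Fintype.card S := by
  refine Finset.card_le_card_of_forall_subsingleton (fun i t => c i = some t) ?_ ?_
  · intro i hi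
    obtain ⟨t, ht⟩ := Option.ne_none_iff_exists'.mp (Finset.mem_filter.mp hi).2
    exact ⟨t, Finset.mem_univ t, ht⟩
  · exact fun t _ i hi j hj => hc i j t hi.2 hj.2

theorem card_sub_card_filter_eq_none_le_card {ι S : Type*} [Fintype ι] [Fintype S]
    {c : ι → Option S} (hc : ∀ i j t, c i = some t → c j = some t → i = j) :
    Fintype.card ι - (Finset.univ.filter fun i => c i = none).card ≤ Fintype.card S := by
  have hsplit : (Finset.univ.filter fun i => c i = none).card +
      (Finset.univ.filter fun i => c i ≠ none).card = Fintype.card ι :=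
    Finset.card_filter_add_card_filter_not (s := Finset.univ) fun i => c i = none
  have hnonempty := card_filter_ne_none_le_card hc
  omega

theorem mul_pred_div_lt_of_le_ceil {α : Type*} [Field α] [LinearOrder α] [IsStrictOrderedRing α]
    [FloorSemiring α] {x d : α} {m : ℕ} (hd : 0 < d) (hm : 0 < m) (h : m ≤ ⌈x * m / d⌉₊) :
    d * (m - 1 : ℕ) / m < x := by
  have hlt : ((m - 1 : ℕ) : α) < x * m / d := Nat.lt_ceil.mp (by omega)
  rw [div_lt_iff₀ (Nat.cast_pos.mpr hm), mul_comm d]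
  exact (lt_div_iff₀ hd).mp hlt

theorem stmt_7_general {S : Type*} [Fintype S] {F K Z : ℕ} (hZ : Z < F) {c : Fin F → Option S}
    (hempty : (Finset.univ.filter fun j => c j = none).card = Z)
    (hc : ∀ i j t, c i = some t → c j = some t → i = j)
    (hS : Fintype.card S ≤ ⌈((K * (F - Z) : ℕ) : ℚ) / ((Z : ℚ) + 1)⌉₊) :
    (((Z + 1) * (F - Z - 1) : ℕ) : ℚ) / ((F - Z : ℕ) : ℚ) < K := by
  have hcard : F - Z ≤ Fintype.card S := by
    simpa only [Fintype.card_fin, hempty] using card_sub_card_filter_eq_none_le_card hc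
  have hceil : F - Z ≤ ⌈(K : ℚ) * (F - Z : ℕ) / ((Z : ℚ) + 1)⌉₊ := by
    simpa only [Nat.cast_mul] using hcard.trans hS
  rw [Nat.cast_mul, Nat.cast_add_one]
  exact mul_pred_div_lt_of_le_ceil (by positivity) (Nat.sub_pos_of_lt hZ) hceil

theorem stmt_7 (F K Z : ℕ) (hF : 0 < F) (hK : 0 < K) (hZ : Z < F)
    (h : ∃ (S : Type) (_ : Fintype S) (A : Fin F → Fin K → Option S),
      IsPDA F K Z A ∧
        Fintype.card S = ⌈((K * (F - Z) : ℕ) : ℚ) / ((Z : ℚ) + 1)⌉₊) :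
    (K : ℚ) > (((Z + 1) * (F - Z - 1) : ℕ) : ℚ) / ((F - Z : ℕ) : ℚ) := by
  obtain ⟨S, _, A, ⟨hempty, -, hcol, -⟩, hS⟩ := h
  exact stmt_7_general hZ (hempty ⟨0, hK⟩) (fun i j => hcol i j ⟨0, hK⟩) hS.le
end

section
/- Let F, K be positive integers and 0 < Z < F. If there exists an S-PDA with parameters (F, K, Z) such that (Z + 1)·|S| = K(F − Z), then the binomial coefficient C(F, Z) divides K, i.e., K = ℓ·C(F, Z) for some integer ℓ ≥ 1. -/
open scoped Classical

/-!
For a symbol `s` occurring in row `j` of column `k`, every other row containing `s` is empty in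
column `k`, so `s` lies in at most `Z + 1` rows. Counting the nonempty cells, the hypothesis
`(Z + 1) * |S| = K * (F - Z)` makes all these bounds equalities, so the empty rows of column `k`
are exactly the rows of `s` other than `j`. For a set of rows `U` and `i ∈ U`, reading off row `i`
is therefore a bijection from the columns with empty rows `U \ {i}` onto the symbols with rows `U`.
In particular the number of such columns does not depend on `i`. Any two `Z`-sets of rows are
joined by a chain of single-element exchanges, so each of the `C(F, Z)` of them is the set of empty
rows of the same number of columns.
-/

open Finset

section Exchange

variable {α β : Type*} [DecidableEq α]

theorem apply_eq_of_card_eq_of_apply_erase_eq {f : Finset α → β}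
    (hf : ∀ U : Finset α, ∀ i ∈ U, ∀ j ∈ U, f (U.erase i) = f (U.erase j))
    {s t : Finset α} (hst : #s = #t) : f s = f t := by
  induction hn : #(s \ t) generalizing s with
  | zero =>
    rw [card_eq_zero, sdiff_eq_empty_iff_subset] at hn
    rw [eq_of_subset_of_card_le hn hst.ge]
  | succ n ih =>
    obtain ⟨b, hb⟩ : (s \ t).Nonempty := card_pos.1 (by omega)
    obtain ⟨a, ha⟩ : (t \ s).Nonempty := card_pos.1 (by rw [← card_sdiff_comm hst]; omega)
    obtain ⟨hat, has⟩ := mem_sdiff.1 ha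
    have hbU : b ∈ insert a s := mem_insert_of_mem (mem_sdiff.1 hb).1
    have hcard : #((insert a s).erase b) = #t := by
      rw [card_erase_of_mem hbU, card_insert_of_notMem has, Nat.add_sub_cancel, hst]
    have hdiff : #((insert a s).erase b \ t) = n := by
      rw [erase_sdiff_comm, insert_sdiff_of_mem _ hat, card_erase_of_mem hb, hn,
        Nat.add_sub_cancel]
    calc
      f s = f ((insert a s).erase a) := by rw [erase_insert has]
      _ = f ((insert a s).erase b) := hf _ a (mem_insert_self a s) b hbU
      _ = f t := ih hcard hdiff

theorem choose_dvd_card_of_card_fiber_erase_eq [Fintype α] [Fintype β] {E : β → Finset α} {n : ℕ}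
    (hcard : ∀ k, #(E k) = n)
    (hfiber : ∀ U : Finset α, ∀ i ∈ U, ∀ j ∈ U,
      #{k | E k = U.erase i} = #{k | E k = U.erase j}) :
    (Fintype.card α).choose n ∣ Fintype.card β := by
  rcases isEmpty_or_nonempty β with _ | ⟨⟨k₀⟩⟩
  · simp
  have hconst : ∀ T ∈ powersetCard n univ, #{k | E k = T} = #{k | E k = E k₀} := fun T hT ↦
    apply_eq_of_card_eq_of_apply_erase_eq (f := fun T ↦ #{k | E k = T}) hfiber
      ((mem_powersetCard.1 hT).2.trans (hcard k₀).symm)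
  use #{k | E k = E k₀}
  calc
    Fintype.card β = ∑ T ∈ powersetCard n univ, #{k | E k = T} :=
      card_eq_sum_card_fiberwise fun k _ ↦ mem_powersetCard.2 ⟨subset_univ _, hcard k⟩
    _ = (Fintype.card α).choose n * #{k | E k = E k₀} := by
      rw [sum_const_nat hconst, card_powersetCard, card_univ]

end Exchange

section Arrays

variable {ι κ S : Type*} [Fintype ι]

/-- The rows in which column `k` of the array `A` has an empty cell. -/
def emptyRows (A : ι → κ → Option S) (k : κ) : Finset ι :=
  {j | A j k = none}

/-- The rows of the array `A` in which the symbol `s` occurs. -/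
noncomputable def symbolRows (A : ι → κ → Option S) (s : S) : Finset ι :=
  {j | ∃ k, A j k = some s}

variable {A : ι → κ → Option S} {j : ι} {k : κ} {s : S}

theorem mem_emptyRows : j ∈ emptyRows A k ↔ A j k = none :=
  mem_filter_univ j

theorem mem_symbolRows : j ∈ symbolRows A s ↔ ∃ k, A j k = some s :=
  mem_filter_univ j

theorem notMem_emptyRows : j ∉ emptyRows A k ↔ ∃ s, A j k = some s :=
  mem_emptyRows.not.trans Option.ne_none_iff_exists'

end Arrays

namespace IsPDA

variable {F K Z : ℕ} {S : Type} {A : Fin F → Fin K → Option S}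

theorem card_emptyRows (hA : IsPDA F K Z A) (k : Fin K) : #(emptyRows A k) = Z :=
  hA.1 k

theorem column_eq (hA : IsPDA F K Z A) {j : Fin F} {k₁ k₂ : Fin K} {s : S}
    (h₁ : A j k₁ = some s) (h₂ : A j k₂ = some s) : k₁ = k₂ :=
  hA.2.1 j k₁ k₂ s h₁ h₂

theorem symbolRows_erase_subset_emptyRows (hA : IsPDA F K Z A) {j : Fin F} {k : Fin K} {s : S}
    (hs : A j k = some s) : (symbolRows A s).erase j ⊆ emptyRows A k := by
  obtain ⟨-, -, hcol, hcross⟩ := hA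
  intro i hi
  obtain ⟨hij, hi⟩ := mem_erase.1 hi
  obtain ⟨k', hk'⟩ := mem_symbolRows.1 hi
  have hkk' : k' ≠ k := by
    rintro rfl
    exact hij (hcol i j k' s hk' hs)
  exact mem_emptyRows.2 (hcross i j k' k s hij hkk' hk' hs).1

theorem card_symbolRows_le (hA : IsPDA F K Z A) (s : S) : #(symbolRows A s) ≤ Z + 1 := by
  rcases (symbolRows A s).eq_empty_or_nonempty with hempty | ⟨j, hj⟩
  · simp [hempty]
  · obtain ⟨k, hk⟩ := mem_symbolRows.1 hj
    rw [← card_erase_add_one hj, ← hA.card_emptyRows k]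
    gcongr
    exact hA.symbolRows_erase_subset_emptyRows hk

theorem card_columns_eq_card_symbols (hA : IsPDA F K Z A) (i : Fin F)
    {C : Finset (Fin K)} {T : Finset S} (hC : ∀ k ∈ C, ∃ s ∈ T, A i k = some s)
    (hT : ∀ s ∈ T, ∃ k ∈ C, A i k = some s) : #C = #T :=
  le_antisymm
    (card_le_card_of_forall_subsingleton (fun k s ↦ A i k = some s) hC
      fun _ _ _ h₁ _ h₂ ↦ hA.column_eq h₁.2 h₂.2)
    (card_le_card_of_forall_subsingleton' (fun k s ↦ A i k = some s) hT
      fun _ _ _ h₁ _ h₂ ↦ Option.some_injective S (h₁.2.symm.trans h₂.2))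

theorem card_filter_notMem_emptyRows (hA : IsPDA F K Z A) (k : Fin K) :
    #{j | j ∉ emptyRows A k} = F - Z := by
  rw [filter_notMem_eq_sdiff, card_univ_sdiff, hA.card_emptyRows, Fintype.card_fin]

variable [Fintype S]

theorem sum_card_symbolRows (hA : IsPDA F K Z A) :
    ∑ s, #(symbolRows A s) = K * (F - Z) := by
  have hrow (j : Fin F) : #{k | j ∉ emptyRows A k} = #{s | j ∈ symbolRows A s} := by
    apply hA.card_columns_eq_card_symbols j <;>
      simp only [mem_filter_univ, notMem_emptyRows, mem_symbolRows] <;> grind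
  calc
    ∑ s, #(symbolRows A s) = ∑ s, #{j | j ∈ symbolRows A s} := by simp only [filter_univ_mem]
    _ = ∑ j, #{s | j ∈ symbolRows A s} :=
      sum_card_bipartiteAbove_eq_sum_card_bipartiteBelow fun s j ↦ j ∈ symbolRows A s
    _ = ∑ j, #{k | j ∉ emptyRows A k} := by simp only [hrow]
    _ = ∑ k, #{j | j ∉ emptyRows A k} :=
      sum_card_bipartiteAbove_eq_sum_card_bipartiteBelow fun j k ↦ j ∉ emptyRows A k
    _ = K * (F - Z) := by simp [hA.card_filter_notMem_emptyRows]

theorem card_symbolRows (hA : IsPDA F K Z A) (hS : (Z + 1) * Fintype.card S = K * (F - Z))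
    (s : S) : #(symbolRows A s) = Z + 1 := by
  have hsum : ∑ s, #(symbolRows A s) = ∑ _s : S, (Z + 1) := by
    rw [hA.sum_card_symbolRows, ← hS, sum_const, card_univ, smul_eq_mul, mul_comm]
  exact (sum_eq_sum_iff_of_le fun s _ ↦ hA.card_symbolRows_le s).1 hsum s (mem_univ s)

theorem symbolRows_erase_eq_emptyRows (hA : IsPDA F K Z A)
    (hS : (Z + 1) * Fintype.card S = K * (F - Z)) {j : Fin F} {k : Fin K} {s : S}
    (hs : A j k = some s) : (symbolRows A s).erase j = emptyRows A k := by
  refine eq_of_subset_of_card_le (hA.symbolRows_erase_subset_emptyRows hs) ?_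
  rw [card_erase_of_mem (mem_symbolRows.2 ⟨k, hs⟩), hA.card_symbolRows hS, hA.card_emptyRows,
    Nat.add_sub_cancel]

theorem card_filter_emptyRows_eq_erase (hA : IsPDA F K Z A)
    (hS : (Z + 1) * Fintype.card S = K * (F - Z)) {U : Finset (Fin F)} {i : Fin F} (hi : i ∈ U) :
    #{k | emptyRows A k = U.erase i} = #{s | symbolRows A s = U} := by
  apply hA.card_columns_eq_card_symbols i <;> simp only [mem_filter_univ]
  · intro k hk
    obtain ⟨s, hs⟩ := notMem_emptyRows.1 (hk ▸ notMem_erase i U)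
    have herase : (symbolRows A s).erase i = U.erase i :=
      (hA.symbolRows_erase_eq_emptyRows hS hs).trans hk
    refine ⟨s, ?_, hs⟩
    rw [← insert_erase (mem_symbolRows.2 ⟨k, hs⟩), herase, insert_erase hi]
  · rintro s rfl
    obtain ⟨k, hk⟩ := mem_symbolRows.1 hi
    exact ⟨k, (hA.symbolRows_erase_eq_emptyRows hS hk).symm, hk⟩

theorem choose_dvd (hA : IsPDA F K Z A) (hS : (Z + 1) * Fintype.card S = K * (F - Z)) :
    F.choose Z ∣ K := by
  simpa only [Fintype.card_fin] using choose_dvd_card_of_card_fiber_erase_eq hA.card_emptyRows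
    fun U i hi j hj ↦
      (hA.card_filter_emptyRows_eq_erase hS hi).trans (hA.card_filter_emptyRows_eq_erase hS hj).symm

end IsPDA

theorem stmt_8 (F K Z : ℕ) (hF : 0 < F) (hK : 0 < K) (hZ0 : 0 < Z) (hZ : Z < F)
    (h : ∃ (S : Type) (_ : Fintype S) (A : Fin F → Fin K → Option S),
      IsPDA F K Z A ∧ (Z + 1) * Fintype.card S = K * (F - Z)) :
    ∃ ℓ : ℕ, 1 ≤ ℓ ∧ K = ℓ * F.choose Z := by
  obtain ⟨S, _, A, hA, hS⟩ := h
  obtain ⟨ℓ, hℓ⟩ := hA.choose_dvd hS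
  have hpos : 0 < F.choose Z * ℓ := hℓ ▸ hK
  exact ⟨ℓ, Nat.pos_of_mul_pos_left hpos, hℓ.trans (mul_comm _ _)⟩
end

section
/- For all integers Z ≥ 1 and F ≥ Z + 1, there exists an S-PDA with parameters (F, C(F, Z), Z) and |S| = C(F, Z+1) = C(F, Z)·(F − Z)/(Z + 1); that is, an RPDA(F, C(F, Z), Z) exists. -/
open scoped Classical

/-!
Index the rows by the points of an `F`-set, the columns by its `Z`-subsets and the symbols by its
`(Z + 1)`-subsets. Cell `(a, s)` is empty when `a ∈ s` and otherwise holds `insert a s`. If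
`insert a s = insert b s'` with `a ≠ b`, then `a ∈ s'` and `b ∈ s`, which is the crossing condition.
-/

section InsertArray

variable {α : Type*} [DecidableEq α] {n : ℕ} {a b : α} {s s' : Set.powersetCard α n}
  {t : Set.powersetCard α (n + 1)}

/-- The subset array of the Maddah-Ali–Niesen coded caching scheme: rows are points, columns are
`n`-subsets, symbols are `(n + 1)`-subsets. Rows, columns and symbols keep their natural types
instead of being numbered by `Fin`. -/
def insertArray (a : α) (s : Set.powersetCard α n) : Option (Set.powersetCard α (n + 1)) :=
  if h : a ∈ s.1 then none
  else some (Set.powersetCard.ofCard (s := insert a s.1)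
    (by rw [Finset.card_insert_of_notMem h, Set.powersetCard.card_eq]))

theorem insertArray_eq_none_iff : insertArray a s = none ↔ a ∈ s.1 := by
  simp [insertArray]

theorem insertArray_eq_some_iff : insertArray a s = some t ↔ a ∉ s.1 ∧ insert a s.1 = t.1 := by
  simp [insertArray, Subtype.ext_iff]

theorem insertArray_row_injective (h : insertArray a s = some t) (h' : insertArray a s' = some t) :
    s = s' := by
  obtain ⟨has, hst⟩ := insertArray_eq_some_iff.1 h
  obtain ⟨has', hst'⟩ := insertArray_eq_some_iff.1 h'
  exact Subtype.ext <| Finset.insert_erase_invOn.2.injOn has has' (hst.trans hst'.symm)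

theorem insertArray_column_injective (ha : insertArray a s = some t)
    (hb : insertArray b s = some t) : a = b := by
  obtain ⟨has, hat⟩ := insertArray_eq_some_iff.1 ha
  obtain ⟨-, hbt⟩ := insertArray_eq_some_iff.1 hb
  exact (Finset.insert_inj has).1 (hat.trans hbt.symm)

theorem insertArray_crossing_eq_none (hab : a ≠ b) (ha : insertArray a s = some t)
    (hb : insertArray b s' = some t) : insertArray a s' = none := by
  obtain ⟨-, hat⟩ := insertArray_eq_some_iff.1 ha
  obtain ⟨-, hbt⟩ := insertArray_eq_some_iff.1 hb
  have a_mem : a ∈ insert b s'.1 := hbt.trans hat.symm ▸ Finset.mem_insert_self a s.1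
  exact insertArray_eq_none_iff.2 (Finset.mem_of_mem_insert_of_ne a_mem hab)

end InsertArray

theorem isPDA_insertArray {F K Z : ℕ} (e : Fin K ↪ Set.powersetCard (Fin F) Z) :
    IsPDA F K Z fun j k => insertArray j (e k) := by
  refine ⟨fun k => ?_, fun j k₁ k₂ t h₁ h₂ => e.injective (insertArray_row_injective h₁ h₂),
    fun j₁ j₂ k t => insertArray_column_injective, fun j₁ j₂ k₁ k₂ t hj _ h₁ h₂ =>
      ⟨insertArray_crossing_eq_none hj h₁ h₂, insertArray_crossing_eq_none hj.symm h₂ h₁⟩⟩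
  simp only [insertArray_eq_none_iff, Finset.filter_univ_mem, Set.powersetCard.card_eq]

theorem IsPDA.map_symbols {S T : Type} {F K Z : ℕ} {A : Fin F → Fin K → Option S}
    (hA : IsPDA F K Z A) {g : S → T} (hg : g.Injective) :
    IsPDA F K Z fun j k => (A j k).map g := by
  obtain ⟨empty_card, row_inj, column_inj, crossing⟩ := hA
  have eq_some_of_map {j₁ j₂ k₁ k₂ t} (h₁ : (A j₁ k₁).map g = some t)
      (h₂ : (A j₂ k₂).map g = some t) : ∃ s, A j₁ k₁ = some s ∧ A j₂ k₂ = some s := by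
    obtain ⟨s, hs, rfl⟩ := Option.map_eq_some_iff.1 h₁
    exact ⟨s, hs, Option.map_injective hg h₂⟩
  simp only [IsPDA, Option.map_eq_none_iff]
  refine ⟨empty_card, fun j k₁ k₂ t h₁ h₂ => ?_, fun j₁ j₂ k t h₁ h₂ => ?_,
    fun j₁ j₂ k₁ k₂ t hj hk h₁ h₂ => ?_⟩
  all_goals obtain ⟨s, hs₁, hs₂⟩ := eq_some_of_map h₁ h₂
  · exact row_inj j k₁ k₂ s hs₁ hs₂
  · exact column_inj j₁ j₂ k s hs₁ hs₂
  · exact crossing j₁ j₂ k₁ k₂ s hj hk hs₁ hs₂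

/-- An arbitrary enumeration of the `n`-subsets of `Fin F`. -/
noncomputable def powersetCardEquivFin (F n : ℕ) :
    Set.powersetCard (Fin F) n ≃ Fin (F.choose n) :=
  Finite.equivFinOfCardEq (by rw [Set.powersetCard.card, Nat.card_fin])

theorem stmt_12 (F Z : ℕ) (hZ : 1 ≤ Z) (hF : Z + 1 ≤ F) :
    (∃ A : Fin F → Fin (F.choose Z) → Option (Fin (F.choose (Z + 1))),
      IsPDA F (F.choose Z) Z A) ∧
    F.choose (Z + 1) = F.choose Z * (F - Z) / (Z + 1) := by
  constructor
  · let columns := (powersetCardEquivFin F Z).symm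
    let symbols := powersetCardEquivFin F (Z + 1)
    exact ⟨_, (isPDA_insertArray columns.toEmbedding).map_symbols symbols.injective⟩
  · exact Nat.eq_div_of_mul_eq_left Z.succ_ne_zero (Nat.choose_succ_right_eq F Z)
end

section
/- Let F ≥ 2 and K ≥ 1 be integers and write K = ℓF + i with ℓ ≥ 0 and 0 ≤ i < F. Then s(F, K, 1) = ℓ·F(F − 1)/2 + i(i − 1)/2 + i(F − i). -/
open scoped Classical

/-!
In a placement delivery array with one empty cell per column, say in row `r k` of column `k`, two
distinct cells `(j₁, k₁)`, `(j₂, k₂)` can carry the same symbol only if they *cross*: `j₁ = r k₂`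
and `j₂ = r k₁`. So for every ranking of the rows, the cells `(j, k)` with `j` ranked below `r k`
carry distinct symbols. Rank the rows by the number of columns having their empty cell there. For
`K = ℓ F + i` columns, the top `u` rows then contain at least `u ℓ + min i u` of the empty cells,
and summing over `u < F` bounds the alphabet from below.

Equality holds when the empty cells run cyclically, `r k = k mod F`: the symbol of `(j, k)` is the
unordered pair `{j, k mod F}` together with the block number `k / F`.
-/

open Finset

section SingleHole

variable {R C S : Type*}

/-- A placement delivery array with one empty cell per column, the empty cell of column `k` being
in row `r k`. The three conditions on repeated symbols become the single condition that two cells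
with the same symbol coincide or cross. -/
structure IsSingleHoleArray (A : R → C → Option S) (r : C → R) : Prop where
  eq_none_iff : ∀ j k, A j k = none ↔ j = r k
  eq_or_cross : ∀ {j₁ j₂ k₁ k₂ t}, A j₁ k₁ = some t → A j₂ k₂ = some t →
    (j₁ = j₂ ∧ k₁ = k₂) ∨ (j₁ = r k₂ ∧ j₂ = r k₁)

namespace IsSingleHoleArray

variable {A : R → C → Option S} {r : C → R}

lemma ne_hole (hA : IsSingleHoleArray A r) {j : R} {k : C} {t : S} (h : A j k = some t) :
    j ≠ r k := by
  rw [Ne, ← hA.eq_none_iff, h]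
  exact Option.some_ne_none t

lemma exists_eq_some (hA : IsSingleHoleArray A r) {j : R} {k : C} (h : j ≠ r k) :
    ∃ t, A j k = some t :=
  Option.ne_none_iff_exists'.1 fun hnone => h ((hA.eq_none_iff j k).1 hnone)

theorem sum_card_lt_hole_le_card [Fintype R] [Fintype C] [Fintype S] {α : Type*} [Preorder α]
    [DecidableLT α] (hA : IsSingleHoleArray A r) (rank : R → α) :
    ∑ j, #{k | rank j < rank (r k)} ≤ Fintype.card S := by
  have occupied : ∀ j k, rank j < rank (r k) → ∃ t, A j k = some t := fun j k h =>
    hA.exists_eq_some fun hj => h.ne (congrArg rank hj)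
  let cells : Finset (Σ _ : R, C) := univ.sigma fun j => {k | rank j < rank (r k)}
  have mem_cells : ∀ c : Σ _ : R, C, c ∈ cells ↔ rank c.1 < rank (r c.2) := by simp [cells]
  have symbols_injOn : Set.InjOn (fun c : Σ _ : R, C => A c.1 c.2) cells := by
    rintro ⟨j₁, k₁⟩ h₁ ⟨j₂, k₂⟩ h₂ (heq : A j₁ k₁ = A j₂ k₂)
    rw [mem_coe, mem_cells] at h₁ h₂
    obtain ⟨t, ht⟩ := occupied j₁ k₁ h₁
    obtain ⟨rfl, rfl⟩ | ⟨hj₁, hj₂⟩ := hA.eq_or_cross ht (heq.symm.trans ht)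
    · rfl
    · simp only [← hj₁, ← hj₂] at h₁ h₂
      exact absurd h₂ h₁.asymm
  have symbols_mem : ∀ c ∈ cells, A c.1 c.2 ∈ univ.map Function.Embedding.some := fun c hc => by
    obtain ⟨t, ht⟩ := occupied c.1 c.2 ((mem_cells c).1 hc)
    simp [ht]
  calc ∑ j, #{k | rank j < rank (r k)} = #cells := (card_sigma _ _).symm
    _ ≤ #((univ : Finset S).map Function.Embedding.some) :=
      card_le_card_of_injOn _ symbols_mem symbols_injOn
    _ = Fintype.card S := by rw [card_map, card_univ]

end IsSingleHoleArray

end SingleHole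

theorem isPDA_one_iff {S : Type} {F K : ℕ} {A : Fin F → Fin K → Option S} :
    IsPDA F K 1 A ↔ ∃ r, IsSingleHoleArray A r := by
  constructor
  · rintro ⟨hcard, hrow, hcol, hcross⟩
    choose r hr using fun k => card_eq_one.1 (hcard k)
    have hnone : ∀ j k, A j k = none ↔ j = r k := fun j k => by
      simpa using Finset.ext_iff.1 (hr k) j
    refine ⟨r, hnone, fun {j₁ j₂ k₁ k₂ t} h₁ h₂ => ?_⟩
    rcases eq_or_ne j₁ j₂ with rfl | hj
    · exact .inl ⟨rfl, hrow _ _ _ _ h₁ h₂⟩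
    rcases eq_or_ne k₁ k₂ with rfl | hk
    · exact .inl ⟨hcol _ _ _ _ h₁ h₂, rfl⟩
    · exact .inr ((hcross _ _ _ _ _ hj hk h₁ h₂).imp (hnone _ _).1 (hnone _ _).1)
  · rintro ⟨r, hA⟩
    refine ⟨fun k => card_eq_one.2 ⟨r k, ?_⟩, fun j k₁ k₂ t h₁ h₂ => ?_,
      fun j₁ j₂ k t h₁ h₂ => ?_, fun j₁ j₂ k₁ k₂ t hj _ h₁ h₂ => ?_⟩
    · ext j
      simp [hA.eq_none_iff]
    · exact ((hA.eq_or_cross h₁ h₂).resolve_right fun h => hA.ne_hole h₂ h.1).2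
    · exact ((hA.eq_or_cross h₁ h₂).resolve_right fun h => hA.ne_hole h₁ h.1).1
    · exact ((hA.eq_or_cross h₁ h₂).resolve_left fun h => hj h.1).imp
        (hA.eq_none_iff _ _).2 (hA.eq_none_iff _ _).2

theorem card_Ioi_mul_add_min_le_sum_Ioi {ι : Type*} [Fintype ι] [LinearOrder ι]
    [LocallyFiniteOrderTop ι] {f : ι → ℕ} (hf : Monotone f) {ℓ i : ℕ}
    (hsum : Fintype.card ι * ℓ + i ≤ ∑ b, f b) (m : ι) :
    #(Ioi m) * ℓ + min i #(Ioi m) ≤ ∑ b ∈ Ioi m, f b := by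
  rcases lt_or_ge ℓ (f m) with hm | hm
  · have above : ∀ b ∈ Ioi m, ℓ + 1 ≤ f b := fun b hb => hm.trans_le (hf (mem_Ioi.1 hb).le)
    calc #(Ioi m) * ℓ + min i #(Ioi m) ≤ #(Ioi m) * ℓ + #(Ioi m) := by gcongr; exact min_le_right ..
      _ = #(Ioi m) • (ℓ + 1) := by rw [smul_eq_mul, mul_add_one]
      _ ≤ ∑ b ∈ Ioi m, f b := card_nsmul_le_sum _ _ _ above
  · have below : ∀ b ∈ (Ioi m)ᶜ, f b ≤ ℓ := fun b hb =>
      (hf (not_lt.1 (by simpa using hb))).trans hm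
    have sum_below : ∑ b ∈ (Ioi m)ᶜ, f b ≤ #(Ioi m)ᶜ * ℓ := sum_le_card_nsmul _ _ _ below
    have card_split : #(Ioi m) * ℓ + #(Ioi m)ᶜ * ℓ = Fintype.card ι * ℓ := by
      rw [← add_mul, card_add_card_compl]
    have sum_split := sum_add_sum_compl (Ioi m) f
    have := min_le_left i #(Ioi m)
    omega

theorem IsSingleHoleArray.sum_range_le_card {S : Type*} [Fintype S] {F K ℓ i : ℕ}
    {A : Fin F → Fin K → Option S} {r : Fin K → Fin F} (hA : IsSingleHoleArray A r)
    (hK : F * ℓ + i ≤ K) :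
    ∑ u ∈ range F, (u * ℓ + min i u) ≤ Fintype.card S := by
  let load : Fin F → ℕ := fun a => #{k | r k = a}
  let e : Equiv.Perm (Fin F) := Tuple.sort load
  have sum_load : ∑ b, load (e b) = K := by
    rw [Equiv.sum_comp e load, ← card_eq_sum_card_fiberwise (by simp), card_univ, Fintype.card_fin]
  have card_above : ∀ m, #{k | m < e.symm (r k)} = ∑ b ∈ Ioi m, load (e b) := fun m => by
    rw [card_eq_sum_card_fiberwise (f := fun k => e.symm (r k)) (t := Ioi m) (by simp [Set.MapsTo])]
    refine sum_congr rfl fun b hb => congrArg card ?_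
    ext k
    simp only [mem_filter, mem_univ, true_and, Equiv.symm_apply_eq]
    grind
  calc ∑ u ∈ range F, (u * ℓ + min i u)
      = ∑ m : Fin F, (#(Ioi m) * ℓ + min i #(Ioi m)) := by
        simp only [Fin.card_Ioi]
        rw [Fin.sum_univ_eq_sum_range (fun m => (F - 1 - m) * ℓ + min i (F - 1 - m)),
          sum_range_reflect (fun u => u * ℓ + min i u)]
    _ ≤ ∑ m : Fin F, ∑ b ∈ Ioi m, load (e b) := sum_le_sum fun m _ =>
        card_Ioi_mul_add_min_le_sum_Ioi (Tuple.monotone_sort load)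
          (by rw [Fintype.card_fin]; exact hK.trans_eq sum_load.symm) m
    _ = ∑ j, #{k | e.symm j < e.symm (r k)} := by
        simp only [← card_above]
        exact (Equiv.sum_comp e.symm fun m => #{k | m < e.symm (r k)}).symm
    _ ≤ Fintype.card S := hA.sum_card_lt_hole_le_card e.symm

theorem exists_isPDA_one_of_label {L : Type*} {F K : ℕ} (r : Fin K → Fin F)
    (label : Fin F → Fin K → L) (T : Finset L) (hT : ∀ j k, j ≠ r k → label j k ∈ T)
    (hlabel : ∀ j₁ j₂ k₁ k₂, label j₁ k₁ = label j₂ k₂ →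
      (j₁ = j₂ ∧ k₁ = k₂) ∨ (j₁ = r k₂ ∧ j₂ = r k₁)) :
    ∃ A : Fin F → Fin K → Option (Fin #T), IsPDA F K 1 A := by
  let A : Fin F → Fin K → Option (Fin #T) := fun j k =>
    if h : j = r k then none else some (T.equivFin ⟨label j k, hT j k h⟩)
  refine ⟨A, isPDA_one_iff.2 ⟨r, fun j k => by simp [A], ?_⟩⟩
  intro j₁ j₂ k₁ k₂ t h₁ h₂
  obtain ⟨_, ht₁⟩ := Option.dite_none_left_eq_some.1 h₁
  obtain ⟨_, ht₂⟩ := Option.dite_none_left_eq_some.1 h₂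
  have heq := T.equivFin.injective (Option.some.inj (ht₁.trans ht₂.symm))
  exact hlabel _ _ _ _ (congrArg Subtype.val heq)

section CyclicArray

variable {F : ℕ} [NeZero F]

/-- The symbol of the cell `(j, k)` in the array whose empty cells run cyclically through the rows:
the block of `F` consecutive columns containing `k`, and the unordered pair formed by `j` and the
row of the empty cell of column `k`. -/
def cyclicLabel (j : Fin F) (k : ℕ) : ℕ × Sym2 (Fin F) := (k / F, s(j, Fin.ofNat F k))

lemma eq_or_cross_of_cyclicLabel_eq {j₁ j₂ : Fin F} {k₁ k₂ : ℕ}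
    (h : cyclicLabel j₁ k₁ = cyclicLabel j₂ k₂) :
    (j₁ = j₂ ∧ k₁ = k₂) ∨ (j₁ = Fin.ofNat F k₂ ∧ j₂ = Fin.ofNat F k₁) := by
  obtain ⟨hblock, hpair⟩ := Prod.mk.inj h
  refine (Sym2.eq_iff.1 hpair).imp (fun ⟨hj, hhole⟩ => ⟨hj, ?_⟩) (And.imp_right Eq.symm)
  have hmod : k₁ % F = k₂ % F := congrArg Fin.val hhole
  rw [← Nat.div_add_mod k₁ F, ← Nat.div_add_mod k₂ F, hblock, hmod]

lemma cyclicLabel_cross (j : Fin F) (k : ℕ) :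
    cyclicLabel (Fin.ofNat F k) (F * (k / F) + j) = cyclicLabel j k := by
  have hdiv : (F * (k / F) + j) / F = k / F := by
    rw [Nat.mul_add_div (NeZero.pos F), Nat.div_eq_of_lt j.isLt, add_zero]
  have hmod : Fin.ofNat F (F * (k / F) + j) = j := by
    ext
    simp [Nat.mod_eq_of_lt j.isLt]
  rw [cyclicLabel, hdiv, hmod, Sym2.eq_swap, cyclicLabel]

end CyclicArray

theorem exists_isPDA_one_le_sum_card (F K : ℕ) [NeZero F] :
    ∃ n ≤ ∑ j : Fin F, #{k : Fin K | Fin.ofNat F k < j},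
      ∃ A : Fin F → Fin K → Option (Fin n), IsPDA F K 1 A := by
  let cells : Finset (Σ _ : Fin F, Fin K) := univ.sigma fun j => {k : Fin K | Fin.ofNat F k < j}
  let symbols := cells.image fun c => cyclicLabel c.1 c.2
  have mem_symbols : ∀ (j : Fin F) (k : Fin K), j ≠ Fin.ofNat F k →
      cyclicLabel j k ∈ symbols := fun j k hj => by
    -- A cell above the empty cell of its column crosses one below it in an earlier column.
    rcases hj.lt_or_gt with hlt | hgt
    · have partner_lt : F * (k / F) + j < K := by
        have hj_lt : (j : ℕ) < k % F := hlt
        have := Nat.div_add_mod (k : ℕ) F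
        omega
      refine mem_image.2 ⟨⟨Fin.ofNat F k, ⟨F * (k / F) + j, partner_lt⟩⟩, ?_, cyclicLabel_cross j k⟩
      simpa [cells, Fin.lt_def, Nat.mod_eq_of_lt j.isLt] using hlt
    · exact mem_image.2 ⟨⟨j, k⟩, by simpa [cells] using hgt, rfl⟩
  refine ⟨#symbols, card_image_le.trans_eq (card_sigma _ _), ?_⟩
  exact exists_isPDA_one_of_label (fun k => Fin.ofNat F k) (fun j k => cyclicLabel j k) symbols
    mem_symbols fun _ _ _ _ h => by simpa only [Fin.val_inj] using eq_or_cross_of_cyclicLabel_eq h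

lemma count_lt_eq_min (j n : ℕ) : n.count (· < j) = min n j := by
  induction n with
  | zero => simp
  | succ n ih => rw [Nat.count_succ, ih]; split_ifs <;> omega

lemma count_mod_lt {F i j : ℕ} (hi : i ≤ F) (hj : j ≤ F) (ℓ : ℕ) :
    (F * ℓ + i).count (· % F < j) = j * ℓ + min i j := by
  have within_block : ∀ n ≤ F, n.count (· % F < j) = min n j := fun n hn => by
    rw [← count_lt_eq_min, Nat.count_eq_card_filter_range, Nat.count_eq_card_filter_range]
    refine congrArg card (filter_congr fun k hk => ?_)
    rw [Nat.mod_eq_of_lt ((mem_range.1 hk).trans_le hn)]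
  induction ℓ with
  | zero => simpa using within_block i hi
  | succ ℓ ih =>
    rw [mul_add_one, add_comm (F * ℓ), add_assoc, Nat.count_add, within_block F le_rfl]
    simp only [Nat.add_mod_left, ih, min_eq_right hj]
    ring

lemma card_fin_filter_eq_count (K : ℕ) (p : ℕ → Prop) [DecidablePred p] :
    #{k : Fin K | p k} = K.count p := by
  rw [card_filter, Fin.sum_univ_eq_sum_range (fun k => if p k then 1 else 0), ← card_filter,
    Nat.count_eq_card_filter_range]

lemma sum_range_min_right {F i : ℕ} (hi : i ≤ F) :
    ∑ u ∈ range F, min i u = i * (i - 1) / 2 + i * (F - i) := by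
  have low : ∑ u ∈ range i, min i u = i * (i - 1) / 2 := by
    rw [← sum_range_id]
    exact sum_congr rfl fun u hu => min_eq_right (mem_range.1 hu).le
  have high : ∑ u ∈ Ico i F, min i u = i * (F - i) := by
    rw [sum_congr rfl fun u hu => min_eq_left (mem_Ico.1 hu).1, sum_const, Nat.card_Ico,
      smul_eq_mul, mul_comm]
  rw [← sum_range_add_sum_Ico _ hi, low, high]

theorem sPDA_one_eq_sum_range {F ℓ i : ℕ} (hi : i < F) :
    sPDA F (F * ℓ + i) 1 = ∑ u ∈ range F, (u * ℓ + min i u) := by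
  have : NeZero F := ⟨(Nat.zero_lt_of_lt hi).ne'⟩
  have sum_card_eq : ∑ j : Fin F, #{k : Fin (F * ℓ + i) | Fin.ofNat F k < j}
      = ∑ u ∈ range F, (u * ℓ + min i u) := by
    rw [← Fin.sum_univ_eq_sum_range (fun u => u * ℓ + min i u)]
    refine sum_congr rfl fun j _ => ?_
    rw [← count_mod_lt hi.le j.isLt.le ℓ, ← card_fin_filter_eq_count]
    rfl
  obtain ⟨n, hn, hexists⟩ := exists_isPDA_one_le_sum_card F (F * ℓ + i)
  apply le_antisymm
  · exact (Nat.sInf_le hexists).trans (hn.trans_eq sum_card_eq)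
  · refine le_csInf ⟨n, hexists⟩ ?_
    rintro m ⟨A, hA⟩
    obtain ⟨r, hr⟩ := isPDA_one_iff.1 hA
    exact (hr.sum_range_le_card le_rfl).trans_eq (Fintype.card_fin m)

theorem stmt_14 (F K ℓ i : ℕ) (hF : 2 ≤ F) (hK : 1 ≤ K) (hi : i < F)
    (hKeq : K = ℓ * F + i) :
    sPDA F K 1 = ℓ * (F * (F - 1) / 2) + i * (i - 1) / 2 + i * (F - i) := by
  have hsum : ∑ u ∈ range F, (u * ℓ + min i u)
      = ℓ * (F * (F - 1) / 2) + i * (i - 1) / 2 + i * (F - i) := by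
    rw [sum_add_distrib, ← sum_mul, sum_range_id, sum_range_min_right hi.le, mul_comm, add_assoc]
  rw [hKeq, mul_comm ℓ F, sPDA_one_eq_sum_range hi, hsum]
end

section
/- For every positive integer K, s(4, K, 2) = ⌈2K/3⌉ if K ≡ 0, 2 or 5 (mod 6), and s(4, K, 2) = ⌈2K/3⌉ + 1 otherwise. -/
open scoped Classical

/-!
For `Z = F - 2` every column has exactly two nonempty cells. Fix a symbol `t` and draw an arc
`a → b` between rows whenever `t` occurs in row `a` of a column whose other nonempty cell is in
row `b`. The defining conditions make this digraph a forest of stars directed to their centres, so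
it has at most `F - 1` arcs, with equality only for a spanning star. The arcs of all symbols
correspond to the `2K` nonempty cells, and a column with support `{a, b}` contributes one arc
`a → b` and one arc `b → a`, so every arc occurs as often as its reverse.

If two symbols are not spanning stars, then `2K ≤ (F - 1)n - 2`. If exactly one is not, the balance
between arcs and reverse arcs forces it to have no arcs at all, which for `F ≥ 3` gives the same
bound. If all symbols are spanning stars, balance makes each row the centre of equally many,
so `F ∣ n`. For `F = 4`, every pair `(K, n)` not excluded in this way is realised by juxtaposing
arrays with 2, 3 and 6 columns, after deleting columns or adding unused symbols.
-/

open Finset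

/-- A directed star forest: every component is a star whose arcs point to its centre. Encoded as
out-degrees at most one and no directed walk of length two, so in particular no loops. -/
structure IsStarForest {V : Type*} (R : V → V → Prop) : Prop where
  rightUnique : Relator.RightUnique R
  not_rel_of_rel : ∀ ⦃a b c⦄, R a b → ¬R b c

/-- Every vertex other than `d` has an arc to `d`. A star forest with this property is exactly the
spanning star centred at `d`. -/
def IsSpanningStar {V : Type*} (R : V → V → Prop) (d : V) : Prop :=
  ∀ a, a ≠ d → R a d

/-- The set of arcs of a finite digraph. -/
noncomputable def arcs {V : Type*} [Fintype V] (R : V → V → Prop) : Finset (V × V) :=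
  {p | R p.1 p.2}

/-- The number of arcs by which a star forest falls short of a spanning star. The subtraction is
a true one on two or more vertices, by `IsStarForest.card_arcs_add_deficiency`. -/
noncomputable def deficiency {V : Type*} [Fintype V] (R : V → V → Prop) : ℕ :=
  Fintype.card V - (#(arcs R) + 1)

namespace IsStarForest

variable {V : Type*} {R : V → V → Prop} {a b c d : V}

lemma rel_iff_of_isSpanningStar (hR : IsStarForest R) (hd : IsSpanningStar R d) :
    R a b ↔ a ≠ d ∧ b = d := by
  refine ⟨fun hab => ?_, fun ⟨had, hbd⟩ => hbd ▸ hd a had⟩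
  have had : a ≠ d := by
    rintro rfl
    by_cases hba : b = a
    · exact hR.not_rel_of_rel hab (by rwa [hba] at hab ⊢)
    · exact hR.not_rel_of_rel hab (hd b hba)
  exact ⟨had, hR.rightUnique hab (hd a had)⟩

lemma isSpanningStar_unique (hR : IsStarForest R) (hc : IsSpanningStar R c)
    (hd : IsSpanningStar R d) : c = d := by
  by_contra hcd
  exact hR.not_rel_of_rel (hd c hcd) (hc d (Ne.symm hcd))

lemma rel_iff_isSpanningStar (hR : IsStarForest R) (hstar : ∃ d, IsSpanningStar R d)
    (hab : a ≠ b) : R a b ↔ IsSpanningStar R b := by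
  refine ⟨fun h => ?_, fun h => h a hab⟩
  obtain ⟨d, hd⟩ := hstar
  rwa [((hR.rel_iff_of_isSpanningStar hd).1 h).2]

lemma exists_sink_ne_sink [Nontrivial V] (hR : IsStarForest R)
    (hstar : ¬∃ d, IsSpanningStar R d) :
    ∃ b c, b ≠ c ∧ (∀ v, ¬R b v) ∧ ∀ v, ¬R c v := by
  by_cases harc : ∃ a b, R a b
  · obtain ⟨a, b, hab⟩ := harc
    obtain ⟨c, hcb, hc⟩ : ∃ c, c ≠ b ∧ ¬R c b := by
      by_contra! h
      exact hstar ⟨b, h⟩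
    by_cases hout : ∃ e, R c e
    · obtain ⟨e, hce⟩ := hout
      have hbe : b ≠ e := fun hbe => hc (hbe ▸ hce)
      exact ⟨b, e, hbe, fun _ => hR.not_rel_of_rel hab, fun _ => hR.not_rel_of_rel hce⟩
    · exact ⟨b, c, hcb.symm, fun _ => hR.not_rel_of_rel hab, not_exists.1 hout⟩
  · obtain ⟨b, c, hbc⟩ := exists_pair_ne V
    exact ⟨b, c, hbc, fun v hv => harc ⟨b, v, hv⟩, fun v hv => harc ⟨c, v, hv⟩⟩

variable [Fintype V]

lemma card_arcs_add_card_le (hR : IsStarForest R) {s : Finset V} (hs : ∀ b ∈ s, ∀ c, ¬R b c) :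
    #(arcs R) + #s ≤ Fintype.card V := by
  have hinj : Set.InjOn Prod.fst (arcs R : Set (V × V)) := by
    rintro ⟨a, b⟩ hab ⟨a', c⟩ hac rfl
    simp only [arcs, coe_filter, mem_univ, true_and, Set.mem_ofPred_eq] at hab hac
    rw [hR.rightUnique hab hac]
  have hdisj : Disjoint ((arcs R).image Prod.fst) s := by
    simp only [disjoint_left, mem_image, arcs, mem_filter, mem_univ, true_and]
    rintro _ ⟨⟨a, b⟩, hab, rfl⟩ has
    exact hs a has b hab
  rw [← card_image_of_injOn hinj, ← card_union_of_disjoint hdisj]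
  exact card_le_univ _

lemma card_arcs_add_one_of_isSpanningStar (hR : IsStarForest R) (hd : IsSpanningStar R d) :
    #(arcs R) + 1 = Fintype.card V := by
  have harcs : arcs R = univ.erase d ×ˢ {d} := by
    ext ⟨a, b⟩
    simp only [arcs, mem_filter, mem_univ, true_and, and_true, mem_product, mem_erase,
      mem_singleton, hR.rel_iff_of_isSpanningStar hd]
  rw [harcs, card_product, card_singleton, mul_one, card_erase_add_one (mem_univ d), card_univ]

lemma card_arcs_add_two_le [Nontrivial V] (hR : IsStarForest R)
    (hstar : ¬∃ d, IsSpanningStar R d) : #(arcs R) + 2 ≤ Fintype.card V := by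
  obtain ⟨b, c, hbc, hb, hc⟩ := hR.exists_sink_ne_sink hstar
  rw [← card_pair hbc]
  exact hR.card_arcs_add_card_le (by simp [hb, hc])

lemma card_arcs_add_deficiency [Nontrivial V] (hR : IsStarForest R) :
    #(arcs R) + 1 + deficiency R = Fintype.card V := by
  refine Nat.add_sub_cancel' ?_
  by_cases hstar : ∃ d, IsSpanningStar R d
  · obtain ⟨d, hd⟩ := hstar
    exact (hR.card_arcs_add_one_of_isSpanningStar hd).le
  · exact (Nat.le_succ _).trans (hR.card_arcs_add_two_le hstar)

lemma deficiency_eq_zero (hR : IsStarForest R) (hd : IsSpanningStar R d) : deficiency R = 0 := by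
  rw [deficiency, hR.card_arcs_add_one_of_isSpanningStar hd, Nat.sub_self]

lemma deficiency_pos [Nontrivial V] (hR : IsStarForest R) (hstar : ¬∃ d, IsSpanningStar R d) :
    0 < deficiency R :=
  Nat.sub_pos_of_lt (hR.card_arcs_add_two_le hstar)

end IsStarForest

lemma deficiency_eq_card_sub_one {V : Type*} [Fintype V] {R : V → V → Prop}
    (hR : ∀ a b, ¬R a b) : deficiency R = Fintype.card V - 1 := by
  simp [deficiency, arcs, hR]

/-- A family of digraphs on `V` containing each arc as often as the reverse arc. -/
def IsBalanced {T V : Type*} [Fintype T] (R : T → V → V → Prop) : Prop :=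
  ∀ a b, #{t | R t a b} = #{t | R t b a}

section StarForestFamily

variable {T V : Type*} {R : T → V → V → Prop} {a b : V}

lemma card_filter_rel_eq_card_filter_isSpanningStar (hR : ∀ t, IsStarForest (R t)) {U : Finset T}
    (hU : ∀ t ∈ U, ∃ d, IsSpanningStar (R t) d) (hab : a ≠ b) :
    #{t ∈ U | R t a b} = #{t ∈ U | IsSpanningStar (R t) b} :=
  congrArg card <| filter_congr fun t ht => (hR t).rel_iff_isSpanningStar (hU t ht) hab

variable [Fintype T]

/-- If `x d` counts the `t ≠ t₀` with centre `d`, then balance forces `x a = x b + 1`.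
Hence for every other vertex `c` one of `x c ≠ x a`, `x c ≠ x b` holds, so that `R t₀` has an
arc joining `c` to `a` or `b`, and `c → b` is the only one that a star forest allows. -/
lemma IsBalanced.isSpanningStar_of_forall_ne (hbal : IsBalanced R)
    (hR : ∀ t, IsStarForest (R t)) {t₀ : T}
    (hstar : ∀ t ≠ t₀, ∃ d, IsSpanningStar (R t) d) (hab : R t₀ a b) :
    IsSpanningStar (R t₀) b := by
  let x : V → ℕ := fun d => #{t ∈ univ.erase t₀ | IsSpanningStar (R t) d}
  have card_rel {u v : V} (huv : u ≠ v) :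
      #{t | R t u v} = x v + if R t₀ u v then 1 else 0 := by
    rw [card_filter, ← sum_erase_add _ _ (mem_univ t₀), ← card_filter,
      card_filter_rel_eq_card_filter_isSpanningStar hR (fun t ht => hstar t (ne_of_mem_erase ht))
        huv]
  have balance {u v : V} (huv : u ≠ v) :
      x v + (if R t₀ u v then 1 else 0) = x u + if R t₀ v u then 1 else 0 := by
    rw [← card_rel huv, ← card_rel huv.symm, hbal]
  intro c hcb
  by_contra hc
  have hba : ¬R t₀ b a := (hR t₀).not_rel_of_rel hab
  have hbc : ¬R t₀ b c := (hR t₀).not_rel_of_rel hab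
  have hca : ¬R t₀ c a := fun h => (hR t₀).not_rel_of_rel h hab
  have hac : ¬R t₀ a c := fun h => hcb ((hR t₀).rightUnique h hab)
  have hne_ab : a ≠ b := fun h => hba (h ▸ h ▸ hab)
  have hne_ca : c ≠ a := fun h => hc (h ▸ hab)
  have hxab := balance hne_ab
  have hxca := balance hne_ca
  have hxcb := balance hcb
  simp only [hab, hba, hbc, hca, hac, hc, if_true, if_false] at hxab hxca hxcb
  omega

variable [Fintype V]

lemma IsBalanced.card_dvd_card (hbal : IsBalanced R) (hR : ∀ t, IsStarForest (R t))
    (hstar : ∀ t, ∃ d, IsSpanningStar (R t) d) : Fintype.card V ∣ Fintype.card T := by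
  choose centre hcentre using hstar
  have rel_iff {a b : V} (hab : a ≠ b) (t : T) : R t a b ↔ centre t = b := by
    rw [(hR t).rel_iff_isSpanningStar ⟨_, hcentre t⟩ hab]
    exact ⟨(hR t).isSpanningStar_unique (hcentre t), fun h => h ▸ hcentre t⟩
  have hconst (a b : V) : #{t | centre t = a} = #{t | centre t = b} := by
    rcases eq_or_ne a b with rfl | hab
    · rfl
    · simpa only [rel_iff hab, rel_iff hab.symm] using (hbal a b).symm
  rcases isEmpty_or_nonempty V with hV | ⟨⟨d⟩⟩
  · simp [Fintype.card_eq_zero_iff.2 (Function.isEmpty centre)]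
  · refine ⟨#{t | centre t = d}, ?_⟩
    calc Fintype.card T = ∑ a, #{t | centre t = a} :=
          card_eq_sum_card_fiberwise fun _ _ => mem_univ _
      _ = Fintype.card V * #{t | centre t = d} := by simp [hconst _ d]

lemma IsBalanced.two_le_sum_deficiency (hbal : IsBalanced R) (hR : ∀ t, IsStarForest (R t))
    (hV : 3 ≤ Fintype.card V) (hstar : ¬∀ t, ∃ d, IsSpanningStar (R t) d) :
    2 ≤ ∑ t, deficiency (R t) := by
  have : Nontrivial V := Fintype.one_lt_card_iff_nontrivial.1 (by omega)
  obtain ⟨t₀, ht₀⟩ := not_forall.1 hstar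
  by_cases hother : ∀ t ≠ t₀, ∃ d, IsSpanningStar (R t) d
  · have hempty (a b : V) : ¬R t₀ a b := fun hab =>
      ht₀ ⟨b, hbal.isSpanningStar_of_forall_ne hR hother hab⟩
    calc 2 ≤ deficiency (R t₀) := by rw [deficiency_eq_card_sub_one hempty]; omega
      _ ≤ ∑ t, deficiency (R t) := 
        single_le_sum_of_canonicallyOrdered (f := fun t => deficiency (R t)) (mem_univ t₀)
  · push Not at hother
    obtain ⟨t₁, hne, ht₁⟩ := hother
    have h₀ := (hR t₀).deficiency_pos ht₀
    have h₁ := (hR t₁).deficiency_pos (not_exists.2 ht₁)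
    calc 2 ≤ deficiency (R t₁) + deficiency (R t₀) := by omega
      _ = ∑ t ∈ {t₁, t₀}, deficiency (R t) := (sum_pair (f := fun t => deficiency (R t)) hne).symm
      _ ≤ ∑ t, deficiency (R t) := sum_le_sum_of_subset (subset_univ _)

lemma IsBalanced.sum_card_arcs_add_two_le_or_eq (hbal : IsBalanced R)
    (hR : ∀ t, IsStarForest (R t)) (hV : 3 ≤ Fintype.card V) :
    ∑ t, #(arcs (R t)) + Fintype.card T + 2 ≤ Fintype.card V * Fintype.card T ∨
      ∑ t, #(arcs (R t)) + Fintype.card T = Fintype.card V * Fintype.card T ∧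
        Fintype.card V ∣ Fintype.card T := by
  have : Nontrivial V := Fintype.one_lt_card_iff_nontrivial.1 (by omega)
  have htotal : ∑ t, #(arcs (R t)) + Fintype.card T + ∑ t, deficiency (R t) =
      Fintype.card V * Fintype.card T := by
    calc _ = ∑ t, (#(arcs (R t)) + 1 + deficiency (R t)) := by simp [sum_add_distrib]
      _ = _ := by simp [(hR _).card_arcs_add_deficiency, mul_comm]
  by_cases hstar : ∀ t, ∃ d, IsSpanningStar (R t) d
  · have hzero : ∑ t, deficiency (R t) = 0 :=
      sum_eq_zero fun t _ => (hR t).deficiency_eq_zero (hstar t).choose_spec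
    exact Or.inr ⟨by omega, hbal.card_dvd_card hR hstar⟩
  · have := hbal.two_le_sum_deficiency hR hV hstar
    exact Or.inl (by omega)

end StarForestFamily

/-- The digraph on the rows attached to a symbol `t`: there is an arc from `a` to `b` when `t`
occurs in row `a`, in a column whose cell in row `b` is nonempty too. -/
def SymbolArc {S : Type} {F K : ℕ} (A : Fin F → Fin K → Option S) (t : S) (a b : Fin F) : Prop :=
  a ≠ b ∧ ∃ k, A a k = some t ∧ A b k ≠ none

namespace IsPDA

variable {S : Type} {F K Z : ℕ} {A : Fin F → Fin K → Option S}

lemma card_filter_ne_none (hA : IsPDA F K Z A) (k : Fin K) : #{j | A j k ≠ none} = F - Z := by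
  rw [filter_not, card_sdiff_of_subset (filter_subset _ _), hA.1 k, card_univ, Fintype.card_fin]

lemma isStarForest_symbolArc {A : Fin (Z + 2) → Fin K → Option S} (hA : IsPDA (Z + 2) K Z A)
    (t : S) : IsStarForest (SymbolArc A t) where
  rightUnique := by
    rintro a b c ⟨hab, k, hak, hbk⟩ ⟨hac, k', hak', hck⟩
    obtain rfl := hA.2.1 a k k' t hak hak'
    by_contra hbc
    have hsub : {a, b, c} ⊆ ({j | A j k ≠ none} : Finset (Fin (Z + 2))) := by
      simp [insert_subset_iff, hak, hbk, hck]
    have hcard := card_le_card hsub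
    rw [card_eq_three.2 ⟨a, b, c, hab, hac, hbc, rfl⟩, hA.card_filter_ne_none] at hcard
    omega
  not_rel_of_rel := by
    rintro a b c ⟨hab, k, hak, hbk⟩ ⟨-, k', hbk', -⟩
    rcases eq_or_ne k k' with rfl | hk
    · exact hab (hA.2.2.1 a b k t hak hbk')
    · exact hbk (hA.2.2.2 a b k k' t hab hk hak hbk').2

variable [Fintype S]

lemma card_filter_symbolArc (hA : IsPDA F K Z A) {a b : Fin F} (hab : a ≠ b) :
    #{t | SymbolArc A t a b} = #{k | A a k ≠ none ∧ A b k ≠ none} := by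
  have hinj : Set.InjOn (A a) ({k | A a k ≠ none ∧ A b k ≠ none} : Finset (Fin K)) := by
    intro k hk k' _ hkk'
    obtain ⟨t, ht⟩ := Option.ne_none_iff_exists'.1 (mem_filter.1 hk).2.1
    exact hA.2.1 a k k' t ht (hkk' ▸ ht)
  rw [← card_image_of_injOn hinj, ← card_image_of_injective _ (Option.some_injective S)]
  refine congrArg card (Finset.ext fun o => ?_)
  cases o with
  | none => simp +contextual
  | some t =>
    have hcell (k : Fin K) :
        (A a k = some t ∧ A b k ≠ none) ↔ (A a k ≠ none ∧ A b k ≠ none) ∧ A a k = some t := by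
      grind
    simp [SymbolArc, hab, hcell]

lemma isBalanced_symbolArc (hA : IsPDA F K Z A) : IsBalanced (SymbolArc A) := by
  intro a b
  rcases eq_or_ne a b with rfl | hab
  · rfl
  · simp only [hA.card_filter_symbolArc hab, hA.card_filter_symbolArc hab.symm, and_comm]

lemma sum_card_arcs_symbolArc {A : Fin (Z + 2) → Fin K → Option S} (hA : IsPDA (Z + 2) K Z A) :
    ∑ t, #(arcs (SymbolArc A t)) = 2 * K := by
  have hoff (t : S) : arcs (SymbolArc A t) =
      ({p ∈ univ.offDiag | SymbolArc A t p.1 p.2} : Finset (Fin (Z + 2) × Fin (Z + 2))) := by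
    ext p
    simpa [arcs] using fun h : SymbolArc A t p.1 p.2 => h.1
  calc ∑ t, #(arcs (SymbolArc A t))
      = ∑ p ∈ univ.offDiag, #{t | SymbolArc A t p.1 p.2} := by
        simp only [hoff]
        exact sum_card_bipartiteAbove_eq_sum_card_bipartiteBelow _
    _ = ∑ p ∈ univ.offDiag, #{k | A p.1 k ≠ none ∧ A p.2 k ≠ none} :=
        sum_congr rfl fun p hp => hA.card_filter_symbolArc (mem_offDiag.1 hp).2.2
    _ = ∑ k, #{p ∈ univ.offDiag | A p.1 k ≠ none ∧ A p.2 k ≠ none} :=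
        sum_card_bipartiteAbove_eq_sum_card_bipartiteBelow _
    _ = ∑ k, #(({j | A j k ≠ none} : Finset (Fin (Z + 2))).offDiag) := by
        refine sum_congr rfl fun k _ => congrArg card ?_
        ext p
        simp only [mem_filter, mem_offDiag, mem_univ, true_and]
        tauto
    _ = 2 * K := by
        simp [offDiag_card, hA.card_filter_ne_none, mul_comm]

theorem two_mul_add_two_le_or_eq {A : Fin (Z + 2) → Fin K → Option S}
    (hA : IsPDA (Z + 2) K Z A) (hZ : 0 < Z) :
    2 * K + Fintype.card S + 2 ≤ (Z + 2) * Fintype.card S ∨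
      2 * K + Fintype.card S = (Z + 2) * Fintype.card S ∧ Z + 2 ∣ Fintype.card S := by
  have hbound := hA.isBalanced_symbolArc.sum_card_arcs_add_two_le_or_eq
    hA.isStarForest_symbolArc (by rw [Fintype.card_fin]; omega)
  rwa [hA.sum_card_arcs_symbolArc, Fintype.card_fin] at hbound

end IsPDA

lemma isPDA_iff {S : Type} {F K Z : ℕ} {A : Fin F → Fin K → Option S} :
    IsPDA F K Z A ↔ (∀ k, #{j | A j k = none} = Z) ∧
      ∀ j₁ j₂ k₁ k₂ t, A j₁ k₁ = some t → A j₂ k₂ = some t →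
        (j₁ = j₂ ∧ k₁ = k₂) ∨ (A j₁ k₂ = none ∧ A j₂ k₁ = none) := by
  refine and_congr_right fun _ => ⟨fun ⟨hrow, hcol, hcross⟩ j₁ j₂ k₁ k₂ t h₁ h₂ => ?_,
    fun h => ⟨fun j k₁ k₂ t h₁ h₂ => ?_, fun j₁ j₂ k t h₁ h₂ => ?_,
      fun j₁ j₂ k₁ k₂ t hj _ h₁ h₂ => ?_⟩⟩
  · rcases eq_or_ne j₁ j₂ with rfl | hj
    · exact Or.inl ⟨rfl, hrow j₁ k₁ k₂ t h₁ h₂⟩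
    rcases eq_or_ne k₁ k₂ with rfl | hk
    · exact Or.inl ⟨hcol j₁ j₂ k₁ t h₁ h₂, rfl⟩
    · exact Or.inr (hcross j₁ j₂ k₁ k₂ t hj hk h₁ h₂)
  · simpa [h₁, h₂] using h j j k₁ k₂ t h₁ h₂
  · simpa [h₁, h₂] using h j₁ j₂ k k t h₁ h₂
  · simpa [hj] using h j₁ j₂ k₁ k₂ t h₁ h₂

/-- `n` symbols suffice for a placement delivery array with parameters `(F, K, Z)`. -/
def HasPDA (F K Z n : ℕ) : Prop :=
  ∃ A : Fin F → Fin K → Option (Fin n), IsPDA F K Z A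

lemma hasPDA_zero (F Z n : ℕ) : HasPDA F 0 Z n :=
  ⟨fun _ => Fin.elim0, by simp [isPDA_iff]⟩

namespace HasPDA

variable {F K K' Z n n' : ℕ}

lemma mono_columns (h : HasPDA F K Z n) (hK : K' ≤ K) : HasPDA F K' Z n := by
  obtain ⟨A, hA⟩ := h
  rw [isPDA_iff] at hA
  refine ⟨fun j k => A j (Fin.castLE hK k), isPDA_iff.2 ⟨fun k => hA.1 _, ?_⟩⟩
  intro j₁ j₂ k₁ k₂ t h₁ h₂
  simpa using hA.2 j₁ j₂ _ _ t h₁ h₂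

lemma add (h : HasPDA F K Z n) (h' : HasPDA F K' Z n') : HasPDA F (K + K') Z (n + n') := by
  obtain ⟨A, hA⟩ := h
  obtain ⟨B, hB⟩ := h'
  rw [isPDA_iff] at hA hB
  have hdisj (s : Fin n) (s' : Fin n') : Fin.castAdd n' s ≠ Fin.natAdd n s' :=
    Fin.ne_of_val_ne ((Fin.castAdd_lt n' s).trans_le (Fin.le_coe_natAdd n s')).ne
  refine ⟨fun j => Fin.append (fun k => (A j k).map (Fin.castAdd n'))
    (fun k => (B j k).map (Fin.natAdd n)), isPDA_iff.2 ⟨?_, ?_⟩⟩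
  · refine Fin.addCases (fun k => ?_) (fun k => ?_)
    · simpa using hA.1 k
    · simpa using hB.1 k
  · intro j₁ j₂ k₁ k₂ t
    induction k₁ using Fin.addCases <;> induction k₂ using Fin.addCases <;>
      simp only [Fin.append_left, Fin.append_right, Option.map_eq_some_iff,
        Option.map_eq_none_iff] <;>
      rintro ⟨s, h₁, rfl⟩ ⟨s', h₂, hs⟩
    · obtain rfl := Fin.castAdd_injective _ _ hs
      simpa using hA.2 j₁ j₂ _ _ s' h₁ h₂
    · exact absurd hs.symm (hdisj s s')
    · exact absurd hs (hdisj s' s)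
    · obtain rfl := Fin.natAdd_injective _ _ hs
      simpa using hB.2 j₁ j₂ _ _ s' h₁ h₂

lemma mono_symbols (h : HasPDA F K Z n) (hn : n ≤ n') : HasPDA F K Z n' := by
  simpa [Nat.add_sub_cancel' hn] using h.add (hasPDA_zero F Z (n' - n))

lemma mul (h : HasPDA F K Z n) (q : ℕ) : HasPDA F (K * q) Z (n * q) := by
  induction q with
  | zero => exact hasPDA_zero F Z _
  | succ q ih => exact ih.add h

end HasPDA

lemma hasPDA_four_by_two : HasPDA 4 2 2 2 :=
  ⟨![![some 0, none],
     ![some 1, none],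
     ![none, some 0],
     ![none, some 1]],
    isPDA_iff.2 (by decide)⟩

lemma hasPDA_four_by_three : HasPDA 4 3 2 3 :=
  ⟨![![some 1, some 2, none],
     ![some 0, none, some 2],
     ![none, some 0, some 1],
     ![none, none, none]],
    isPDA_iff.2 (by decide)⟩

set_option maxRecDepth 100000 in
-- The columns are the pairs of rows; each nonempty cell names the other row of its column.
lemma hasPDA_four_by_six : HasPDA 4 6 2 4 :=
  ⟨![![some 1, some 2, some 3, none, none, none],
     ![some 0, none, none, some 2, some 3, none],
     ![none, some 0, none, some 1, none, some 3],
     ![none, none, some 0, none, some 1, some 2]],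
    isPDA_iff.2 (by decide)⟩

lemma hasPDA_four_two_of_two_mul_add_two_le {K n : ℕ} (h : 2 * K + 2 ≤ 3 * n) : HasPDA 4 K 2 n := by
  suffices hmod : ∃ s, HasPDA 4 (K % 6) 2 s ∧ 4 * (K / 6) + s ≤ n by
    obtain ⟨s, hs, hsn⟩ := hmod
    have hK := (hasPDA_four_by_six.mul (K / 6)).add hs
    rw [Nat.div_add_mod] at hK
    exact hK.mono_symbols hsn
  have hlt : K % 6 < 6 := Nat.mod_lt _ (by norm_num)
  rcases (by omega : K % 6 = 0 ∨ (0 < K % 6 ∧ K % 6 ≤ 2) ∨ K % 6 = 3 ∨ 3 < K % 6) with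
    hr | hr | hr | hr
  · exact ⟨0, hr ▸ hasPDA_zero 4 2 0, by omega⟩
  · exact ⟨2, hasPDA_four_by_two.mono_columns hr.2, by omega⟩
  · exact ⟨3, hr ▸ hasPDA_four_by_three, by omega⟩
  · exact ⟨4, hasPDA_four_by_six.mono_columns hlt.le, by omega⟩

theorem hasPDA_four_two_iff {K n : ℕ} :
    HasPDA 4 K 2 n ↔ 2 * K + 2 ≤ 3 * n ∨ (6 ∣ K ∧ 3 * n = 2 * K) := by
  constructor
  · rintro ⟨A, hA⟩
    have hbound := hA.two_mul_add_two_le_or_eq two_pos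
    rw [Fintype.card_fin] at hbound
    omega
  · rintro (h | ⟨⟨q, rfl⟩, hn⟩)
    · exact hasPDA_four_two_of_two_mul_add_two_le h
    · obtain rfl : n = 4 * q := by omega
      exact hasPDA_four_by_six.mul q

lemma natCeil_two_mul_div_three (K : ℕ) : ⌈(2 * K : ℚ) / 3⌉₊ = (2 * K + 2) / 3 := by
  have hceil := Rat.ceil_natCast_div_natCast (2 * K) 3
  push_cast at hceil
  rw [← Int.ceil_toNat, hceil]
  omega

theorem stmt_16 (K : ℕ) (hK : 0 < K) :
    sPDA 4 K 2 =
      if K % 6 = 0 ∨ K % 6 = 2 ∨ K % 6 = 5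
        then ⌈(2 * K : ℚ) / 3⌉₊
        else ⌈(2 * K : ℚ) / 3⌉₊ + 1 := by
  refine IsLeast.csInf_eq (s := {n | HasPDA 4 K 2 n}) ⟨?_, fun n hn => ?_⟩
  · rw [natCeil_two_mul_div_three, Set.mem_ofPred_eq, hasPDA_four_two_iff]
    split_ifs <;> omega
  · rw [Set.mem_ofPred_eq, hasPDA_four_two_iff] at hn
    rw [natCeil_two_mul_div_three]
    have hmod : K % 3 = 0 ∨ K % 3 = 1 ∨ K % 3 = 2 := by omega
    split_ifs <;> omega
end
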